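/- arXiv:2010.15730 — 16 statements merged into one kernel-verified Lean document; each statement's English description precedes it below -/
import Mathlib

section
/- Let p ≥ 2 and α ≥ 2. Then the distributed approval voting correspondence has pairwise distinct rows if and only if β ≥ α − 2; that is, the following are equivalent: (i) β ≥ α − 2; (ii) for all distinct x, x' ∈ X there exists y ∈ Y with AM(x+y) ≠ AM(x'+y). -/
/-- The set of candidates receiving the maximum number of cards under `z`. -/
def AM {A : Type*} [Fintype A] (z : A → ℕ) : Set A := {a | ∀ b, z b ≤ z a}

/-- Discrete intermediate value: a total between the bounds is attained. -/
theorem exists_between_sum {A : Type*} [Fintype A] (l u : A → ℕ) (hlu : ∀ i, l i ≤ u i)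
    (n : ℕ) (h1 : ∑ i, l i ≤ n) (h2 : n ≤ ∑ i, u i) :
    ∃ y : A → ℕ, (∀ i, l i ≤ y i) ∧ (∀ i, y i ≤ u i) ∧ ∑ i, y i = n := by
  classical
  induction n, h1 using Nat.le_induction with
  | base => exact ⟨l, fun _ => le_rfl, hlu, rfl⟩
  | succ n hn ih =>
    obtain ⟨y, hy1, hy2, hy3⟩ := ih (by omega)
    have : ∃ i ∈ Finset.univ, y i < u i := by
      apply Finset.exists_lt_of_sum_lt
      omega
    obtain ⟨i, -, hi⟩ := this
    refine ⟨y + Pi.single i 1, fun j => ?_, fun j => ?_, ?_⟩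
    · have := hy1 j
      simp only [Pi.add_apply]; omega
    · have := hy2 j
      by_cases hj : j = i
      · subst hj; simp; omega
      · simp [hj]; omega
    · simp [Finset.sum_add_distrib, hy3]

theorem sum_two_le {A : Type*} [Fintype A] (f : A → ℕ) (a b : A) (hab : a ≠ b) :
    f a + f b ≤ ∑ i, f i := by
  classical
  rw [← Finset.sum_pair hab]
  exact Finset.sum_le_sum_of_subset (Finset.subset_univ _)

theorem sum_three_le {A : Type*} [Fintype A] (f : A → ℕ) (a b c : A) (hab : a ≠ b)
    (hac : a ≠ c) (hbc : b ≠ c) :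
    f a + (f b + f c) ≤ ∑ i, f i := by
  classical
  rw [← Finset.sum_pair hbc, ← Finset.sum_insert (by simp [hab, hac])]
  exact Finset.sum_le_sum_of_subset (Finset.subset_univ _)

theorem dav_aux {A : Type*} [Fintype A] (α β : ℕ) (h : α - 2 ≤ β)
    (x x' : A → ℕ) (hx : ∑ a, x a = α) (hx' : ∑ a, x' a = α) (hne : x ≠ x')
    (c c' : A) (hc : ∀ i, x i ≤ x c) (hc' : ∀ i, x' i ≤ x' c') (hcc : x' c' ≤ x c) :
    ∃ y : A → ℕ, (∑ a, y a) = β ∧ AM (x + y) ≠ AM (x' + y) := by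
  classical
  have key : ∀ u v : A → ℕ, ∑ a, u a = α → ∑ a, v a = α → u ≠ v → ∃ a, u a < v a := by
    intro u v hu hv huv
    by_contra! hcon
    apply huv
    have := (Finset.sum_eq_sum_iff_of_le (s := Finset.univ) (f := v) (g := u)
      (fun i _ => hcon i)).1 (by rw [hu, hv])
    funext i
    exact (this i (Finset.mem_univ i)).symm
  obtain ⟨a, ha⟩ := key x x' hx hx' hne
  obtain ⟨b, hb⟩ := key x' x hx' hx hne.symm
  have hac : a ≠ c := by
    rintro rfl
    have := hc' a
    omega
  have hcard : 0 < Fintype.card A := Fintype.card_pos_iff.2 ⟨a⟩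
  have hsum : ∀ t, x' c' ≤ t → ∑ i, (t - x' i) + α = Fintype.card A * t := by
    intro t ht
    rw [← hx', ← Finset.sum_add_distrib]
    rw [Finset.sum_congr rfl (fun i _ => Nat.sub_add_cancel ((hc' i).trans ht))]
    simp
  have hex : ∃ t, x' c' ≤ t ∧ α + β ≤ Fintype.card A * t :=
    ⟨x' c' + (α + β), by omega, by nlinarith⟩
  obtain ⟨t, ⟨ht1, ht2⟩, hmin⟩ : ∃ t, (x' c' ≤ t ∧ α + β ≤ Fintype.card A * t) ∧
      ∀ s < t, ¬ (x' c' ≤ s ∧ α + β ≤ Fintype.card A * s) :=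
    ⟨Nat.find hex, Nat.find_spec hex, fun s hs => Nat.find_min hex hs⟩
  have hlow : (t - x' a) + (t + 1 - (x' a - x a) - x c) ≤ β := by
    rcases Nat.eq_or_lt_of_le ht1 with he | hlt
    · by_cases hca : c' = a
      · subst hca; omega
      · have := sum_two_le x' c' a hca
        omega
    · have hm := hmin (t - 1) (by omega)
      have hs := hsum (t - 1) (by omega)
      have hlt2 : Fintype.card A * (t - 1) < α + β := by
        by_contra! hcon
        exact hm ⟨by omega, hcon⟩
      have h2 := sum_two_le (fun i => t - 1 - x' i) a c hac
      have hA := hc' a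
      have hC := hc' c
      have hB := hc b
      by_cases hcM : x' c = x c
      · have hbc : b ≠ c := by rintro rfl; omega
        have hba : a ≠ b := by rintro rfl; omega
        have h3 := sum_three_le (fun i => t - 1 - x' i) a b c hba hac hbc
        omega
      · omega
  have hCt := hc' c
  have hAt := hc' a
  obtain ⟨y, hy1, hy2, hy3⟩ := exists_between_sum
    (Pi.single a (t - x' a) + Pi.single c (t + 1 - (x' a - x a) - x c)) (fun i => t - x' i)
    (by
      intro i
      by_cases hia : i = a
      · subst hia; simp [hac]
      · by_cases hic : i = c
        · subst hic; simp [hia]; omega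
        · simp [hia, hic]) β
    (by simpa [Finset.sum_add_distrib] using hlow)
    (by have := hsum t ht1; omega)
  refine ⟨y, hy3, fun heq => ?_⟩
  have hya := hy1 a
  have hyc := hy1 c
  simp [hac, hac.symm] at hya hyc
  have hya2 := hy2 a
  have hmem : a ∈ AM (x' + y) := by
    intro i
    have h1 := hy2 i
    have h2 := hc' i
    simp only [Pi.add_apply] at *
    omega
  rw [← heq] at hmem
  have := hmem c
  simp only [Pi.add_apply] at this
  omega

/-- For `p ≥ 2` and `α ≥ 2`, the DAV correspondence has pairwise distinct rows
iff `β ≥ α - 2`. -/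
theorem dav_correspondence_distinct_rows_iff
    {A : Type*} [Fintype A] (p α β : ℕ)
    (hcard : Fintype.card A = p) (hp : 2 ≤ p) (hα : 2 ≤ α) (hβ : 1 ≤ β) :
    α - 2 ≤ β ↔
      ∀ x x' : A → ℕ, (∑ a, x a) = α → (∑ a, x' a) = α → x ≠ x' →
        ∃ y : A → ℕ, (∑ a, y a) = β ∧ AM (x + y) ≠ AM (x' + y) := by
  classical
  obtain ⟨a, b, hab⟩ := Fintype.exists_pair_of_one_lt_card (α := A) (by omega)
  constructor
  · intro h x x' hx hx' hne
    haveI : Nonempty A := ⟨a⟩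
    obtain ⟨c, hc⟩ := Finite.exists_max x
    obtain ⟨c', hc'⟩ := Finite.exists_max x'
    rcases le_total (x' c') (x c) with hcc | hcc
    · exact dav_aux α β h x x' hx hx' hne c c' hc hc' hcc
    · obtain ⟨y, hy, hy'⟩ := dav_aux α β h x' x hx' hx hne.symm c' c hc' hc hcc
      exact ⟨y, hy, hy'.symm⟩
  · intro h
    by_contra! hlt
    obtain ⟨y, hy, hne⟩ := h (Pi.single a α) (Pi.single a (α - 1) + Pi.single b 1)
      (by simp) (by simp [Finset.sum_add_distrib]; omega)
      (by
        intro he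
        have := congrFun he b
        simp [hab.symm] at this)
    apply hne
    have hyle : ∀ i, y i ≤ β := fun i => by
      rw [← hy]
      exact Finset.single_le_sum (f := y) (fun _ _ => Nat.zero_le _) (Finset.mem_univ i)
    have gen : ∀ z : A → ℕ, (∀ i, i ≠ a → z i < z a) → AM z = {a} := by
      intro z hz
      ext i
      simp only [AM, Set.mem_setOf_eq, Set.mem_singleton_iff]
      constructor
      · intro hi
        by_contra hia
        have := hz i hia
        have := hi a
        omega
      · rintro rfl j
        by_cases hj : j = i
        · rw [hj]
        · exact (hz j hj).le
    rw [gen, gen]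
    · intro i hi
      have := hyle i
      by_cases hib : i = b
      · subst hib; simp [hi, hab]; omega
      · simp [hi, hib, hab]; omega
    · intro i hi
      have := hyle i
      simp [hi]; omega
end

section
/- If β ≥ α − 1, then for all distinct x, x' ∈ X there exists a candidate a ∈ A with s(x,a) ≠ s(x',a); that is, distinct rows of the DAV correspondence have pairwise distinct signatures. -/
/-- Main step: if `y` separates and there is an inclusion, cardinalities differ. -/
theorem dav_key {A : Type*} [Fintype A] (β : ℕ) (x x' : A → ℕ) (a : A)
    (hmax : ∀ b, x' b + x a ≤ x' a + x b)
    (y : A → ℕ) (hy : ∑ b, y b = β) (hya : ∀ b, x' b + y b ≤ x' a + y a)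
    (hyn : ∃ b, x a + y a < x b + y b) :
    {y : A → ℕ | (∑ b, y b) = β ∧ a ∈ AM (x + y)}.ncard ≠
        {y : A → ℕ | (∑ b, y b) = β ∧ a ∈ AM (x' + y)}.ncard := by
  classical
  have hfin : {y : A → ℕ | (∑ b, y b) = β ∧ a ∈ AM (x' + y)}.Finite := by
    apply (Set.finite_Iic (fun _ : A => β)).subset
    rintro y ⟨hy, -⟩ i
    rw [← hy]
    exact Finset.single_le_sum (f := y) (fun _ _ => Nat.zero_le _) (Finset.mem_univ i)
  apply ne_of_lt
  apply Set.ncard_lt_ncard _ hfin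
  rw [Set.ssubset_iff_of_subset]
  · refine ⟨y, ⟨hy, fun b => by simpa using hya b⟩, ?_⟩
    rintro ⟨-, h2⟩
    obtain ⟨b, hb⟩ := hyn
    have := h2 b
    simp only [Pi.add_apply] at this
    omega
  · rintro w ⟨hw, hwa⟩
    refine ⟨hw, fun b => ?_⟩
    have h1 := hwa b
    have h2 := hmax b
    simp only [Pi.add_apply] at h1 ⊢
    omega

/-- Sum of a vector supported on (at most) three candidates. -/
theorem dav_sum {A : Type*} [Fintype A] [DecidableEq A] (a b c : A) (u v w : ℕ) :
    ∑ i, ((if i = a then u else 0) + (if i = b then v else 0) + (if i = c then w else 0))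
      = u + v + w := by
  simp [Finset.sum_add_distrib]

/-- If `β ≥ α - 1`, then distinct rows of the DAV correspondence have pairwise
distinct signatures. -/
theorem dav_distinct_signatures
    {A : Type*} [Fintype A] (α β : ℕ) (hα : 1 ≤ α) (hβ : 1 ≤ β)
    (h : α - 1 ≤ β) :
    ∀ x x' : A → ℕ, (∑ a, x a) = α → (∑ a, x' a) = α → x ≠ x' →
      ∃ a : A,
        {y : A → ℕ | (∑ b, y b) = β ∧ a ∈ AM (x + y)}.ncard ≠
        {y : A → ℕ | (∑ b, y b) = β ∧ a ∈ AM (x' + y)}.ncard := by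
  classical
  intro x x' hx hx' hne
  have hle : ∀ i, x' i ≤ α := fun i => by
    rw [← hx']
    exact Finset.single_le_sum (f := x') (fun _ _ => Nat.zero_le _) (Finset.mem_univ i)
  -- a candidate that loses and one that gains
  obtain ⟨b, hb⟩ : ∃ b, x' b < x b := by
    by_contra! hcon
    apply hne
    funext i
    exact (Finset.sum_eq_sum_iff_of_le (fun i _ => hcon i)).1 (hx.trans hx'.symm) i
      (Finset.mem_univ i)
  obtain ⟨g, hg⟩ : ∃ g, x g < x' g := by
    by_contra! hcon
    apply hne
    funext i
    exact ((Finset.sum_eq_sum_iff_of_le (fun i _ => hcon i)).1 (hx'.trans hx.symm) i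
      (Finset.mem_univ i)).symm
  -- maximal gain
  obtain ⟨a₀, -, ha₀⟩ := Finset.exists_max_image Finset.univ
    (fun i => (x' i : ℤ) - x i) ⟨g, Finset.mem_univ g⟩
  obtain ⟨a, ha, ham⟩ := Finset.exists_max_image
    (Finset.univ.filter (fun i => (x' i : ℤ) - x i = x' a₀ - x a₀)) x' ⟨a₀, by simp⟩
  obtain ⟨c, -, hc⟩ := Finset.exists_max_image Finset.univ x' ⟨g, Finset.mem_univ g⟩
  simp only [Finset.mem_filter, Finset.mem_univ, true_and] at ha ham
  have hc' : ∀ i, x' i ≤ x' c := fun i => hc i (Finset.mem_univ i)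
  have hmax : ∀ i, x' i + x a ≤ x' a + x i := fun i => by
    have := ha₀ i (Finset.mem_univ i)
    omega
  have hga := hmax g
  have hba := hmax b
  have hab : a ≠ b := by
    rintro rfl
    omega
  have hlec := hle c
  have hlea := hle a
  refine ⟨a, ?_⟩
  by_cases hac : x' c ≤ x' a
  · have hb1 := hc' b
    refine dav_key β x x' a hmax
      (fun i => (if i = a then (x' a + x' b + β + 1) / 2 - x' a else 0)
        + (if i = b then (x' a + x' b + β) / 2 - x' b else 0) + (if i = b then 0 else 0))
      ?_ ?_ ⟨b, ?_⟩
    · rw [dav_sum]; omega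
    · intro i
      have := hc' i
      by_cases h1 : i = a
      · subst h1; simp
      · by_cases h2 : i = b
        · subst h2; simp [h1, hab]; omega
        · simp [h1, h2, hab]; omega
    · simp [hab, hab.symm]; omega
  · have hca : c ≠ a := by
      rintro rfl
      omega
    have hDc : x' c + x a < x' a + x c := by
      have h1 := hmax c
      by_contra hcon
      have := ham c (by omega)
      omega
    have hb1 := hc' b
    have ha1 := hc' a
    obtain ⟨L, hL⟩ : ∃ L, L = (x' a + x' c + β) / 2 := ⟨_, rfl⟩
    by_cases hev : (x' a + x' c + β) % 2 = 0
    · refine dav_key β x x' a hmax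
        (fun i => (if i = a then L - x' a else 0)
          + (if i = c then L - x' c else 0) + (if i = b then 0 else 0))
        ?_ ?_ ⟨c, ?_⟩
      · rw [dav_sum]; omega
      · intro i
        have := hc' i
        by_cases h1 : i = a
        · subst h1; simp
        · by_cases h2 : i = c
          · subst h2; simp [h1, hca.symm]; omega
          · simp [h1, h2, hca.symm]; omega
      · simp [hca, hca.symm]; omega
    · by_cases hbc : b = c ∨ x' b = L
      · refine dav_key β x x' a hmax
          (fun i => (if i = a then L + 1 - x' a else 0)
            + (if i = c then L - x' c else 0) + (if i = b then 0 else 0))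
          ?_ ?_ ⟨b, ?_⟩
        · rw [dav_sum]; omega
        · intro i
          have := hc' i
          by_cases h1 : i = a
          · subst h1; simp
          · by_cases h2 : i = c
            · subst h2; simp [h1, hca.symm]; omega
            · simp [h1, h2, hca.symm]; omega
        · rcases hbc with hbc | hbc
          · subst hbc; simp [hab, hab.symm]; omega
          · simp [hab.symm, hca.symm]; omega
      · push Not at hbc
        obtain ⟨hbc, hbL⟩ := hbc
        refine dav_key β x x' a hmax
          (fun i => (if i = a then L - x' a else 0)
            + (if i = c then L - x' c else 0) + (if i = b then 1 else 0))
          ?_ ?_ ⟨c, ?_⟩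
        · rw [dav_sum]; omega
        · intro i
          have := hc' i
          by_cases h1 : i = a
          · subst h1; simp
          · by_cases h2 : i = c
            · subst h2; simp [h1, hca.symm, hbc.symm, hab]; omega
            · by_cases h3 : i = b
              · subst h3; simp [h1, h2, hca.symm]; omega
              · simp [h1, h2, h3, hca.symm, hab]; omega
        · simp [hca, hca.symm, hab, hbc.symm]; omega
end

section
/- Let x, x' ∈ X be distinct, let a ∈ A maximize x(e) − x'(e) over e ∈ A, and let b ∈ A maximize x'(e) − x(e) over e ∈ A (differences in ℤ). Define x'' : A → ℕ by x''(a) = x'(a) + 1, x''(b) = x'(b) − 1, and x''(e) = x'(e) for e ∈ A \ {a,b}. Then x'' ∈ X and D(x,x'') ⊆ D(x,x'). -/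
/-- Moving `x'` one step closer to `x` (from `x'` to `x''`) can only shrink the
set `D` of column strategies that surely differentiate the two rows. -/
theorem D_shrinks_for_neighbor
    {A : Type*} [Fintype A] [DecidableEq A] (α β : ℕ) (hα : 1 ≤ α) (hβ : 1 ≤ β)
    (x x' : A → ℕ) (hx : (∑ e, x e) = α) (hx' : (∑ e, x' e) = α) (hne : x ≠ x')
    (a b : A)
    (ha : ∀ e, (x e : ℤ) - x' e ≤ (x a : ℤ) - x' a)
    (hb : ∀ e, (x' e : ℤ) - x e ≤ (x' b : ℤ) - x b)
    (x'' : A → ℕ)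
    (hx'' : x'' = fun e => if e = a then x' a + 1 else if e = b then x' b - 1 else x' e) :
    (∑ e, x'' e) = α ∧
    {y : A → ℕ | (∑ e, y e) = β ∧ AM (x + y) ∩ AM (x'' + y) = ∅} ⊆
      {y : A → ℕ | (∑ e, y e) = β ∧ AM (x + y) ∩ AM (x' + y) = ∅} := by
  have hbpos : x b < x' b := by
    by_contra hcon
    apply hne
    have hle : ∀ e ∈ Finset.univ, x' e ≤ x e := fun e _ => by
      have := hb e
      omega
    have := (Finset.sum_eq_sum_iff_of_le hle).1 (hx'.trans hx.symm)
    funext e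
    exact (this e (Finset.mem_univ e)).symm
  have hapos : x' a < x a := by
    by_contra hcon
    apply hne
    have hle : ∀ e ∈ Finset.univ, x e ≤ x' e := fun e _ => by
      have := ha e
      omega
    have := (Finset.sum_eq_sum_iff_of_le hle).1 (hx.trans hx'.symm)
    funext e
    exact this e (Finset.mem_univ e)
  have hab : b ≠ a := by
    rintro rfl
    omega
  have wa : x'' a = x' a + 1 := by simp [hx'']
  have wb : x'' b = x' b - 1 := by simp [hx'', hab]
  have we : ∀ e, e ≠ a → e ≠ b → x'' e = x' e := by
    intro e h1 h2
    simp [hx'', h1, h2]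
  clear hx''
  constructor
  · have key : ∀ e, x'' e + (if e = b then 1 else 0) = x' e + (if e = a then 1 else 0) := by
      intro e
      by_cases h1 : e = a
      · subst h1
        simp [wa, hab.symm]
      · by_cases h2 : e = b
        · subst h2
          simp [wb, h1]
          omega
        · simp [h1, h2, we e h1 h2]
    have hs := Finset.sum_congr (rfl : (Finset.univ : Finset A) = Finset.univ) (fun e _ => key e)
    simp only [Finset.sum_add_distrib, Finset.sum_ite_eq', Finset.mem_univ, if_true] at hs
    omega
  · rintro y ⟨hy, hD⟩
    refine ⟨hy, ?_⟩
    have hD' : ∀ c, (∀ e, x e + y e ≤ x c + y c) → (∀ e, x'' e + y e ≤ x'' c + y c) → False := by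
      intro c h1 h2
      have : c ∈ AM (x + y) ∩ AM (x'' + y) := ⟨h1, h2⟩
      rw [hD] at this
      exact this
    have wle : ∀ e, e ≠ a → x'' e ≤ x' e := by
      intro e h1
      by_cases h2 : e = b
      · subst h2
        omega
      · exact (we e h1 h2).le
    -- the candidate `a` is never a common maximizer
    have caseA : (∀ e, x e + y e ≤ x a + y a) → (∀ e, x' e + y e ≤ x' a + y a) → False := by
      intro h1 h2
      refine hD' a h1 fun e => ?_
      by_cases h : e = a
      · rw [h]
      · have := wle e h
        have := h2 e
        omega
    have caseC : ∀ c, c ≠ b → (∀ e, x e + y e ≤ x c + y c) →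
        (∀ e, x' e + y e ≤ x' c + y c) → False := by
      intro c hcb h1 h2
      by_cases hca : c = a
      · subst hca
        exact caseA h1 h2
      · have hwc := we c hca hcb
        by_cases hlt : x' a + y a < x' c + y c
        · refine hD' c h1 fun e => ?_
          by_cases h : e = a
          · subst h
            omega
          · have := wle e h
            have := h2 e
            omega
        · have := ha c
          refine caseA (fun e => ?_) (fun e => ?_)
          · have := h1 e
            omega
          · have := h2 e
            omega
    rw [Set.eq_empty_iff_forall_notMem]
    rintro c ⟨h1, h2⟩
    replace h1 : ∀ e, x e + y e ≤ x c + y c := h1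
    replace h2 : ∀ e, x' e + y e ≤ x' c + y c := h2
    by_cases hcb : c = b
    · subst hcb
      by_cases hex : ∃ e, e ≠ c ∧ x' e + y e = x' c + y c
      · obtain ⟨e, hec, he⟩ := hex
        have := hb e
        refine caseC e hec (fun f => ?_) (fun f => ?_)
        · have := h1 f
          omega
        · have := h2 f
          omega
      · push Not at hex
        refine hD' c h1 fun e => ?_
        by_cases hea : e = a
        · subst hea
          have := h1 e
          omega
        · by_cases hec : e = c
          · rw [hec]
          · have := we e hea hec
            have := hex e hec
            have := h2 e
            omega
    · exact caseC c hcb h1 h2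
end

section
/- Suppose p ≥ 3. Let a ≠ b be candidates in A and let x, x' ∈ X satisfy x(a) = x'(a) + 1, x(b) = x'(b) − 1, and x(e) = x'(e) for all e ∈ A \ {a,b}. Then for every y ∈ Y, if AM(x+y) ∩ AM(x'+y) = ∅ then AM(x+y) = {a} and AM(x'+y) = {b}. -/
theorem AM_eq_singleton_aux {A : Type*} [Fintype A] (a b : A) (z w : A → ℕ)
    (h1 : z a = w a + 1) (h2 : z b + 1 = w b)
    (h3 : ∀ e, e ≠ a → e ≠ b → z e = w e)
    (hd : ∀ e, (∀ f, z f ≤ z e) → (∀ f, w f ≤ w e) → False) :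
    AM z = {a} := by
  have hle : ∀ f, f ≠ b → w f ≤ z f := by
    intro f hf
    by_cases hfa : f = a
    · subst hfa; omega
    · exact (h3 f hfa hf).ge
  have hb : ¬ ∀ f, z f ≤ z b := by
    intro h
    refine hd b h fun f => ?_
    by_cases hf : f = b
    · rw [hf]
    · have := hle f hf
      have := h f
      omega
  have hsub : ∀ e, (∀ f, z f ≤ z e) → e = a := by
    intro e he
    by_contra hea
    by_cases heb : e = b
    · subst heb; exact hb he
    have hze := h3 e hea heb
    refine hd e he fun f => ?_
    by_cases hf : f = b
    · subst hf
      by_contra hlt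
      apply hb
      intro g
      have := he g
      omega
    · have := hle f hf
      have := he f
      omega
  haveI : Nonempty A := ⟨a⟩
  obtain ⟨m, hm⟩ := Finite.exists_max z
  have hma := hsub m hm
  subst hma
  ext e
  simp only [AM, Set.mem_setOf_eq, Set.mem_singleton_iff]
  exact ⟨hsub e, fun h => h ▸ hm⟩

/-- For `p ≥ 3` and neighboring strategies `x, x'` (differing by moving one card
from `b` to `a`), if `AM(x+y)` and `AM(x'+y)` are disjoint then they are the
singletons `{a}` and `{b}`. -/
theorem disjoint_AM_of_neighbors
    {A : Type*} [Fintype A] (α β : ℕ) (hα : 1 ≤ α) (hβ : 1 ≤ β)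
    (hp : 3 ≤ Fintype.card A)
    (a b : A) (hab : a ≠ b)
    (x x' : A → ℕ) (hx : (∑ e, x e) = α) (hx' : (∑ e, x' e) = α)
    (h1 : x a = x' a + 1) (h2 : x b + 1 = x' b)
    (h3 : ∀ e, e ≠ a → e ≠ b → x e = x' e)
    (y : A → ℕ) (hy : (∑ e, y e) = β)
    (hdisj : AM (x + y) ∩ AM (x' + y) = ∅) :
    AM (x + y) = {a} ∧ AM (x' + y) = {b} := by
  have hd : ∀ e, e ∈ AM (x + y) → e ∈ AM (x' + y) → False := by
    intro e he he'
    have : e ∈ AM (x + y) ∩ AM (x' + y) := ⟨he, he'⟩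
    rw [hdisj] at this
    exact this
  constructor
  · apply AM_eq_singleton_aux a b (x + y) (x' + y)
    · simp only [Pi.add_apply]; omega
    · simp only [Pi.add_apply]; omega
    · intro e ha hb
      simp only [Pi.add_apply, h3 e ha hb]
    · exact hd
  · apply AM_eq_singleton_aux b a (x' + y) (x + y)
    · simp only [Pi.add_apply]; omega
    · simp only [Pi.add_apply]; omega
    · intro e hb ha
      simp only [Pi.add_apply, h3 e ha hb]
    · exact fun e h h' => hd e h' h
end

section
/- Suppose p = 2. Then every DAV form has pairwise distinct rows if and only if β ≥ α − 1 and α + β is odd. That is, the following are equivalent: (i) β ≥ α − 1 and α + β is odd; (ii) every function g : X × Y → A with g(x,y) ∈ AM(x+y) for all (x,y) ∈ X × Y satisfies: for all distinct x, x' ∈ X there exists y ∈ Y with g(x,y) ≠ g(x',y). -/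
/-- For `p = 2`: every DAV form has pairwise distinct rows iff `β ≥ α - 1` and
`α + β` is odd. -/
theorem dav_form_distinct_rows_iff_two_candidates
    {A : Type*} [Fintype A] (α β : ℕ) (hα : 1 ≤ α) (hβ : 1 ≤ β)
    (hp : Fintype.card A = 2) :
    (α - 1 ≤ β ∧ Odd (α + β)) ↔
      ∀ g : (A → ℕ) → (A → ℕ) → A,
        (∀ x y : A → ℕ, (∑ a, x a) = α → (∑ a, y a) = β → g x y ∈ AM (x + y)) →
        ∀ x x' : A → ℕ, (∑ a, x a) = α → (∑ a, x' a) = α → x ≠ x' →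
          ∃ y : A → ℕ, (∑ a, y a) = β ∧ g x y ≠ g x' y := by
  classical
  obtain ⟨a, b, hab, huniv⟩ := Finset.card_eq_two.mp (Finset.card_univ.trans hp)
  have hsum : ∀ z : A → ℕ, (∑ c, z c) = z a + z b := by
    intro z
    rw [huniv, Finset.sum_pair hab]
  have hcase : ∀ c : A, c = a ∨ c = b := by
    intro c
    have := Finset.mem_univ c
    rw [huniv] at this
    simpa using this
  have hba : b ≠ a := hab.symm
  -- the function with value `m` at `a` and `n` at `b`
  let f : ℕ → ℕ → A → ℕ := fun m n c => if c = a then m else n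
  have fa : ∀ m n, f m n a = m := fun m n => if_pos rfl
  have fb : ∀ m n, f m n b = n := fun m n => if_neg hba
  simp only [hsum]
  constructor
  · rintro ⟨h1, h2⟩ g hg
    have key : ∀ x x' : A → ℕ, x a + x b = α → x' a + x' b = α → x a < x' a →
        ∃ y : A → ℕ, y a + y b = β ∧ g x y ≠ g x' y := by
      intro x x' hx hx' hlt
      obtain ⟨k, hk⟩ := h2
      refine ⟨f (k - x a) (β - (k - x a)), ?_, ?_⟩
      · rw [fa, fb]; omega
      have hs : f (k - x a) (β - (k - x a)) a + f (k - x a) (β - (k - x a)) b = β := by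
        rw [fa, fb]; omega
      have e1 := hg x _ hx hs
      have e2 := hg x' _ hx' hs
      intro he
      rw [← he] at e2
      rcases hcase (g x (f (k - x a) (β - (k - x a)))) with h | h
      · rw [h] at e1
        have := e1 b
        simp only [Pi.add_apply, fa, fb] at this
        omega
      · rw [h] at e2
        have := e2 a
        simp only [Pi.add_apply, fa, fb] at this
        omega
    intro x x' hx hx' hne
    rcases lt_trichotomy (x a) (x' a) with h | h | h
    · exact key x x' hx hx' h
    · exact absurd (funext fun c => by rcases hcase c with rfl | rfl <;> omega) hne
    · obtain ⟨y, hy, hy'⟩ := key x' x hx' hx h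
      exact ⟨y, hy, hy'.symm⟩
  · intro H
    obtain ⟨y, hy, hne⟩ := H
      (fun x y => if x b + y b < x a + y a ∨ (x a = 0 ∧ x b + y b = x a + y a) then a else b)
      (by
        intro x y _ _ c
        simp only [Pi.add_apply]
        split_ifs with h <;> rcases hcase c with rfl | rfl <;> omega)
      (f 0 α) (f 1 (α - 1)) (by rw [fa, fb]; omega) (by rw [fa, fb]; omega)
      (by
        intro h
        have := congrFun h a
        rw [fa, fa] at this
        omega)
    simp only [fa, fb, true_and, one_ne_zero, false_and, or_false] at hne
    have : α + y b = y a + 1 := by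
      split_ifs at hne <;> first | omega | exact absurd rfl hne
    exact ⟨by omega, ⟨y a, by omega⟩⟩
end

section
/- Suppose p = 3. Then every DAV form has pairwise distinct rows if and only if β ≥ 2α or β = 2α − 2. That is, the following are equivalent: (i) β ≥ 2α or β = 2α − 2; (ii) every function g : X × Y → A with g(x,y) ∈ AM(x+y) for all (x,y) ∈ X × Y satisfies: for all distinct x, x' ∈ X there exists y ∈ Y with g(x,y) ≠ g(x',y). -/
theorem dav_third {A : Type*} [Fintype A] (hp : Fintype.card A = 3) (a b : A) (hab : a ≠ b) :
    ∃ c : A, a ≠ c ∧ b ≠ c ∧ (∀ i, i = a ∨ i = b ∨ i = c) ∧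
      ∀ f : A → ℕ, ∑ i, f i = f a + f b + f c := by
  classical
  obtain ⟨c, hc⟩ : ∃ c, c ∉ ({a, b} : Finset A) := by
    by_contra! hcon
    have h1 : (Finset.univ : Finset A) ⊆ {a, b} := fun i _ => hcon i
    have h2 := Finset.card_le_card h1
    have h3 : ({a, b} : Finset A).card ≤ 2 := Finset.card_le_two
    rw [Finset.card_univ, hp] at h2
    omega
  simp only [Finset.mem_insert, Finset.mem_singleton, not_or] at hc
  have hac : a ≠ c := fun h => hc.1 h.symm
  have hbc : b ≠ c := fun h => hc.2 h.symm
  have h3 : ({a, b, c} : Finset A).card = 3 := Finset.card_eq_three.2 ⟨a, b, c, hab, hac, hbc, rfl⟩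
  have hu : ({a, b, c} : Finset A) = Finset.univ :=
    Finset.eq_univ_of_card _ (by rw [h3, hp])
  refine ⟨c, hac, hbc, fun i => ?_, fun f => ?_⟩
  · have : i ∈ ({a, b, c} : Finset A) := by rw [hu]; exact Finset.mem_univ i
    simpa using this
  · rw [← hu, Finset.sum_insert (by simp [hab, hac]), Finset.sum_insert (by simp [hbc]),
      Finset.sum_singleton]
    omega

theorem dav_exists_lt {A : Type*} [Fintype A] (x x' : A → ℕ) (h : ∑ a, x a = ∑ a, x' a)
    (hne : x ≠ x') : ∃ a, x a < x' a := by
  by_contra! hcon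
  have := (Finset.sum_eq_sum_iff_of_le (s := Finset.univ) (f := x') (g := x)
    (fun i _ => hcon i)).1 h.symm
  exact hne (funext fun i => (this i (Finset.mem_univ i)).symm)

theorem dav_vec {A : Type*} (a b c : A) (hab : a ≠ b) (hac : a ≠ c) (hbc : b ≠ c) (p q r : ℕ) :
    ∃ y : A → ℕ, y a = p ∧ y b = q ∧ y c = r := by
  classical
  exact ⟨fun i => if i = a then p else if i = b then q else r, by simp, by simp [hab.symm],
    by simp [hac.symm, hbc.symm]⟩

theorem dav_AM_nonempty {A : Type*} [Fintype A] [Nonempty A] (z : A → ℕ) : ∃ a, a ∈ AM z := by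
  obtain ⟨a, ha⟩ := Finite.exists_max z
  exact ⟨a, ha⟩

/-- For `p = 3`: every DAV form has pairwise distinct rows iff `β ≥ 2α` or
`β = 2α - 2`. -/
theorem dav_form_distinct_rows_iff_three_candidates
    {A : Type*} [Fintype A] (α β : ℕ) (hα : 1 ≤ α) (hβ : 1 ≤ β)
    (hp : Fintype.card A = 3) :
    (2 * α ≤ β ∨ β = 2 * α - 2) ↔
      ∀ g : (A → ℕ) → (A → ℕ) → A,
        (∀ x y : A → ℕ, (∑ a, x a) = α → (∑ a, y a) = β → g x y ∈ AM (x + y)) →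
        ∀ x x' : A → ℕ, (∑ a, x a) = α → (∑ a, x' a) = α → x ≠ x' →
          ∃ y : A → ℕ, (∑ a, y a) = β ∧ g x y ≠ g x' y := by
  classical
  constructor
  · intro hab g hg x x' hx hx' hne
    obtain ⟨a, ha⟩ := dav_exists_lt x x' (hx.trans hx'.symm) hne
    obtain ⟨b, hb⟩ := dav_exists_lt x' x (hx'.trans hx.symm) hne.symm
    have hne' : a ≠ b := by rintro rfl; omega
    obtain ⟨c, hac, hbc, hall, hsum⟩ := dav_third hp a b hne'
    have hx3 := hsum x
    have hx3' := hsum x'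
    obtain ⟨t, ht⟩ : ∃ t, t = (α + β + 4) / 3 := ⟨_, rfl⟩
    obtain ⟨y, hya, hyb, hyc⟩ := dav_vec a b c hne' hac hbc (t - x' a) (t - 1 - x' b)
      (α + β + 1 - 2 * t - x' c)
    have hy3 := hsum y
    have hy : ∑ i, y i = β := by omega
    refine ⟨y, hy, fun heq => ?_⟩
    have h1 := hg x y hx hy
    have h2 := hg x' y hx' hy
    rw [heq] at h1
    have h1b := h1 b
    have h2a := h2 a
    simp only [Pi.add_apply] at h1b h2a
    rcases hall (g x' y) with h | h | h <;> rw [h] at h1b h2a <;> omega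
  · intro hg
    by_contra hcon
    obtain ⟨a, b, hab⟩ := Fintype.exists_pair_of_one_lt_card (α := A) (by omega)
    haveI : Nonempty A := ⟨a⟩
    obtain ⟨c, hac, hbc, hall, hsum⟩ := dav_third hp a b hab
    obtain ⟨x, hxa, hxb, hxc⟩ := dav_vec a b c hab hac hbc 0 1 (α - 1)
    obtain ⟨x', hxa', hxb', hxc'⟩ := dav_vec a b c hab hac hbc 1 0 (α - 1)
    have hx : ∑ i, x i = α := by rw [hsum]; omega
    have hx' : ∑ i, x' i = α := by rw [hsum]; omega
    have hne : x ≠ x' := by rintro rfl; omega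
    have key : ∀ y : A → ℕ, ∃ w, ∑ i, y i = β → w ∈ AM (x + y) ∧ w ∈ AM (x' + y) := by
      intro y
      by_cases hy : ∑ i, y i = β
      swap
      · exact ⟨a, fun h => absurd h hy⟩
      have hy3 := hsum y
      have mem : ∀ (z : A → ℕ) (w : A), z a ≤ z w → z b ≤ z w → z c ≤ z w → w ∈ AM z := by
        intro z w h1 h2 h3 i
        rcases hall i with h | h | h <;> rw [h] <;> assumption
      by_cases hc : y a + 1 ≤ y c + (α - 1) ∧ y b + 1 ≤ y c + (α - 1)
      · refine ⟨c, fun _ => ⟨mem _ _ ?_ ?_ ?_, mem _ _ ?_ ?_ ?_⟩⟩ <;>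
          simp only [Pi.add_apply] <;> omega
      · rcases lt_trichotomy (y a) (y b) with h | h | h
        · refine ⟨b, fun _ => ⟨mem _ _ ?_ ?_ ?_, mem _ _ ?_ ?_ ?_⟩⟩ <;>
            simp only [Pi.add_apply] <;> omega
        · exfalso; omega
        · refine ⟨a, fun _ => ⟨mem _ _ ?_ ?_ ?_, mem _ _ ?_ ?_ ?_⟩⟩ <;>
            simp only [Pi.add_apply] <;> omega
    choose w hw using key
    choose m hm using dav_AM_nonempty (A := A)
    obtain ⟨y, _, hy2⟩ := hg (fun p y => if p = x ∨ p = x' then w y else m (p + y)) (by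
      intro p y _ hy
      by_cases h : p = x ∨ p = x'
      · simp only [if_pos h]
        rcases h with h | h <;> rw [h]
        · exact (hw y hy).1
        · exact (hw y hy).2
      · simp only [if_neg h]
        exact hm _) x x' hx hx' hne
    simp at hy2
end

section
/- Suppose p ≥ 3 and β ≥ 2α. Then for all distinct x, x' ∈ X, with B = B(x,x') = {a ∈ A | x(a) > x'(a)}, the strict inequality |U(x',B)| < |L(x,B)| holds, where L(x,B) = {y ∈ Y | AM(x+y) ⊆ B} and U(x',B) = {y ∈ Y | AM(x'+y) ∩ B ≠ ∅}. -/
theorem aux_lt {A : Type*} [Fintype A] (x x' : A → ℕ) (h : (∑ a, x a) = ∑ a, x' a)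
    (hne : x ≠ x') : ∃ c, x c < x' c := by
  by_contra! hc
  apply hne
  funext i
  exact ((Finset.sum_eq_sum_iff_of_le (fun i _ => hc i)).1 h.symm i (Finset.mem_univ i)).symm

theorem aux_three {A : Type*} [Fintype A] (x : A → ℕ) (a c d : A) (hac : a ≠ c)
    (had : d ≠ a) (hcd : d ≠ c) : x d + x a + x c ≤ ∑ i, x i := by
  classical
  have := Finset.sum_le_sum_of_subset (f := x) (Finset.subset_univ {d, a, c})
  rw [Finset.sum_insert (by simp [had, hcd]), Finset.sum_insert (by simp [hac]),
    Finset.sum_singleton] at this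
  omega

theorem aux_two {A : Type*} [Fintype A] (x : A → ℕ) (a c : A) (hac : a ≠ c) :
    x a + x c ≤ ∑ i, x i := by
  classical
  have := Finset.sum_le_sum_of_subset (f := x) (Finset.subset_univ {a, c})
  rw [Finset.sum_insert (by simp [hac]), Finset.sum_singleton] at this
  omega

/-- If `p ≥ 3` and `β ≥ 2α`, then for all distinct `x, x' ∈ X`, with
`B = B(x,x') = {a | x a > x' a}`, we have `|U(x',B)| < |L(x,B)|`. -/
theorem card_U_lt_card_L
    {A : Type*} [Fintype A] (α β : ℕ) (hα : 1 ≤ α) (hβ : 1 ≤ β)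
    (hp : 3 ≤ Fintype.card A) (hβα : 2 * α ≤ β)
    (x x' : A → ℕ) (hx : (∑ a, x a) = α) (hx' : (∑ a, x' a) = α) (hne : x ≠ x')
    (B : Set A) (hB : B = {a | x' a < x a}) :
    {y : A → ℕ | (∑ a, y a) = β ∧ (AM (x' + y) ∩ B).Nonempty}.ncard <
      {y : A → ℕ | (∑ a, y a) = β ∧ AM (x + y) ⊆ B}.ncard := by
  classical
  subst hB
  apply Set.ncard_lt_ncard
  · rw [Set.ssubset_iff_exists]
    constructor
    · rintro y ⟨hy, a, ha, haB⟩
      refine ⟨hy, fun b hb => ?_⟩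
      have h1 := ha b
      have h2 := hb a
      simp only [Set.mem_setOf_eq, Pi.add_apply] at *
      omega
    · obtain ⟨c, hc⟩ := aux_lt x x' (hx.trans hx'.symm) hne
      obtain ⟨a, ha⟩ := aux_lt x' x (hx'.trans hx.symm) hne.symm
      have hac : a ≠ c := by rintro rfl; omega
      obtain ⟨b, hb⟩ : ∃ b, b ∉ ({a, c} : Finset A) := by
        by_contra! h
        have h1 := Finset.card_le_card (fun i _ => h i : Finset.univ ⊆ ({a, c} : Finset A))
        have h2 := Finset.card_le_two (a := a) (b := c)
        rw [Finset.card_univ] at h1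
        omega
      simp only [Finset.mem_insert, Finset.mem_singleton, not_or] at hb
      obtain ⟨hba, hbc⟩ := hb
      have t := aux_two x a c hac
      have t' := aux_two x' a c hac
      have T := fun d => aux_three x a c d hac
      have T' := fun d => aux_three x' a c d hac
      rw [hx] at t
      rw [hx'] at t'
      simp only [hx] at T
      simp only [hx'] at T'
      obtain ⟨u, v, e, he, hs, huv⟩ : ∃ u v e, e ≤ 1 ∧ u + v + e = β ∧
          x a + u = x c + v + 1 := by
        refine ⟨(β + x c + 1 - x a) / 2, β - (β + x c + 1 - x a) / 2 - (β + x c + 1 - x a) % 2,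
          (β + x c + 1 - x a) % 2, ?_, ?_, ?_⟩ <;> omega
      let y : A → ℕ := Pi.single a u + Pi.single c v + Pi.single b e
      have ya : y a = u := by simp [y, hac, Ne.symm hba]
      have yc : y c = v := by simp [y, hac.symm, Ne.symm hbc]
      have yd : ∀ d, d ≠ a → d ≠ c → y d ≤ 1 := by
        intro d h1 h2
        by_cases h : d = b
        · subst h; simp [y, h1, h2, he]
        · simp [y, h1, h2, h]
      refine ⟨y, ⟨?_, ?_⟩, ?_⟩
      · simp [y, Finset.sum_add_distrib, hs]
      · intro d hd
        have h := hd a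
        simp only [Set.mem_setOf_eq, Pi.add_apply, ya] at *
        by_cases h1 : d = a
        · subst h1; exact ha
        by_cases h2 : d = c
        · subst h2; omega
        have := yd d h1 h2
        have := T d h1 h2
        omega
      · rintro ⟨_, d, hd, hdB⟩
        have h := hd c
        simp only [Set.mem_setOf_eq, Pi.add_apply, yc] at *
        by_cases h1 : d = a
        · subst h1; omega
        by_cases h2 : d = c
        · subst h2; omega
        have := yd d h1 h2
        have := T' d h1 h2
        omega
  · apply (Set.finite_Iic (fun _ : A => β)).subset
    rintro y ⟨hy, -⟩ i
    rw [← hy]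
    exact Finset.single_le_sum (fun _ _ => Nat.zero_le _) (Finset.mem_univ i)
end

section
/- Let x, x' ∈ X be distinct and let B = B(x,x') = {a ∈ A | x(a) > x'(a)}. Then U(x',B) ⊆ L(x,B); that is, for every y ∈ Y, if AM(x'+y) ∩ B ≠ ∅ then AM(x+y) ⊆ B. -/
/-- For distinct `x, x' ∈ X` and `B = B(x,x') = {a | x a > x' a}` we have
`U(x',B) ⊆ L(x,B)`: if `AM(x'+y)` meets `B` then `AM(x+y) ⊆ B`. -/
theorem U_subset_L
    {A : Type*} [Fintype A] (α β : ℕ) (hα : 1 ≤ α) (hβ : 1 ≤ β)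
    (x x' : A → ℕ) (hx : (∑ a, x a) = α) (hx' : (∑ a, x' a) = α) (hne : x ≠ x')
    (B : Set A) (hB : B = {a | x' a < x a})
    (y : A → ℕ) (hy : (∑ a, y a) = β) :
    (AM (x' + y) ∩ B).Nonempty → AM (x + y) ⊆ B := by
  subst hB
  rintro ⟨a, ha, haB⟩ c hc
  have h1 := ha c
  have h2 := hc a
  simp only [Pi.add_apply, Set.mem_setOf_eq] at *
  omega
end

section
/- Let g : Fin p → Fin p → A be a p × p voting form, let i ≠ j be two distinct rows (or two distinct columns) of g, and let a ∈ A be a candidate such that each of the two lines i and j contains at least two entries equal to a. Then g contains m1 or m2 as a submatrix. -/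
/-- `g` contains the pattern `m1 = [[a,b],[c,a]]` as a submatrix. -/
def ContainsM1 {p : ℕ} {A : Type*} (g : Fin p → Fin p → A) : Prop :=
  ∃ i k j l : Fin p, i ≠ k ∧ j ≠ l ∧
    g i j = g k l ∧ g i l ≠ g i j ∧ g k j ≠ g i j

/-- `g` contains the pattern `m2 = [[a,a],[a,a]]` as a submatrix. -/
def ContainsM2 {p : ℕ} {A : Type*} (g : Fin p → Fin p → A) : Prop :=
  ∃ i k j l : Fin p, i ≠ k ∧ j ≠ l ∧
    g i j = g i l ∧ g i j = g k j ∧ g i j = g k l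

/-- Candidate `a` occurs at least twice in row `i` of `g`. -/
def TwiceInRow {p : ℕ} {A : Type*} (g : Fin p → Fin p → A) (i : Fin p) (a : A) : Prop :=
  ∃ j l : Fin p, j ≠ l ∧ g i j = a ∧ g i l = a

/-- Candidate `a` occurs at least twice in column `j` of `g`. -/
def TwiceInCol {p : ℕ} {A : Type*} (g : Fin p → Fin p → A) (j : Fin p) (a : A) : Prop :=
  ∃ i k : Fin p, i ≠ k ∧ g i j = a ∧ g k j = a

/-- `g` contains the pattern `m3 = [a,a,b,b]` in some line (row or column). -/
def ContainsM3 {p : ℕ} {A : Type*} (g : Fin p → Fin p → A) : Prop :=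
  (∃ (i : Fin p) (a b : A), a ≠ b ∧ TwiceInRow g i a ∧ TwiceInRow g i b) ∨
  (∃ (j : Fin p) (a b : A), a ≠ b ∧ TwiceInCol g j a ∧ TwiceInCol g j b)

/-- `g` is a plurality DAV form: rows and columns can be bijectively labeled by
candidates so that every entry equals its row label or its column label. -/
def IsPluralityDAV {p : ℕ} {A : Type*} (g : Fin p → Fin p → A) : Prop :=
  ∃ σ τ : Fin p → A, Function.Bijective σ ∧ Function.Bijective τ ∧
    ∀ i j, g i j = σ i ∨ g i j = τ j

/-- Row version, phrased for an arbitrary pair of distinct rows. -/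
theorem two_pairs_rows_aux {p : ℕ} {A : Type*} (g : Fin p → Fin p → A) (i j : Fin p)
    (hij : i ≠ j) (a : A) (hi : TwiceInRow g i a) (hj : TwiceInRow g j a) :
    ContainsM1 g ∨ ContainsM2 g := by
  obtain ⟨x, y, hxy, hx, hy⟩ := hi
  obtain ⟨z, w, hzw, hz, hw⟩ := hj
  by_cases h1 : ∀ c, g i c = a → g j c = a
  · exact Or.inr ⟨i, j, x, y, hij, hxy, by rw [hx, hy], by rw [hx, h1 x hx],
      by rw [hx, h1 y hy]⟩
  by_cases h2 : ∀ c, g j c = a → g i c = a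
  · exact Or.inr ⟨j, i, z, w, hij.symm, hzw, by rw [hz, hw], by rw [hz, h2 z hz],
      by rw [hz, h2 w hw]⟩
  push Not at h1 h2
  obtain ⟨c, hc, hc'⟩ := h1
  obtain ⟨d, hd, hd'⟩ := h2
  refine Or.inl ⟨i, j, c, d, hij, ?_, by rw [hc, hd], by rwa [hc], by rwa [hc]⟩
  rintro rfl
  exact hc' hd

/-- If two distinct parallel lines of `g` each contain at least two occurrences
of the same candidate `a`, then `g` contains `m1` or `m2` as a submatrix. -/
theorem containsM1_or_M2_of_two_pairs
    {p : ℕ} {A : Type*} (g : Fin p → Fin p → A) (i j : Fin p) (hij : i ≠ j) (a : A)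
    (h : (TwiceInRow g i a ∧ TwiceInRow g j a) ∨ (TwiceInCol g i a ∧ TwiceInCol g j a)) :
    ContainsM1 g ∨ ContainsM2 g := by
  rcases h with ⟨hi, hj⟩ | ⟨hi, hj⟩
  · exact two_pairs_rows_aux g i j hij a hi hj
  · rcases two_pairs_rows_aux (fun r c => g c r) i j hij a hi hj with h | h
    · obtain ⟨r, s, c, d, hrs, hcd, h1, h2, h3⟩ := h
      exact Or.inl ⟨c, d, r, s, hcd, hrs, h1, h3, h2⟩
    · obtain ⟨r, s, c, d, hrs, hcd, h1, h2, h3⟩ := h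
      exact Or.inr ⟨c, d, r, s, hcd, hrs, h2, h1, h3⟩
end

section
/- Let g : Fin p → Fin p → A be a p × p voting form such that the set of candidates appearing as entries of g has cardinality at most p − 1. Then g contains m1 or m2 as a submatrix. -/
theorem cross_aux {p : ℕ} {A : Type*} (g : Fin p → Fin p → A) (z : Fin p)
    (h1 : ¬ ContainsM1 g) (h2 : ¬ ContainsM2 g) (a : A) :
    ∃ r c : Fin p, ∀ i j, g i j = a → i = r ∨ j = c := by
  have k1 : ∀ i k j l, i ≠ k → j ≠ l → g i j = a → g k l = a → g i l = a ∨ g k j = a := by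
    intro i k j l hik hjl e1 e2
    by_contra! hc
    exact h1 ⟨i, k, j, l, hik, hjl, by rw [e1, e2], by rw [e1]; exact hc.1, by rw [e1]; exact hc.2⟩
  have k2 : ∀ i k j l, i ≠ k → j ≠ l → g i j = a → g i l = a → g k j = a → g k l = a → False := by
    intro i k j l hik hjl e1 e2 e3 e4
    exact h2 ⟨i, k, j, l, hik, hjl, by rw [e1, e2], by rw [e1, e3], by rw [e1, e4]⟩
  by_cases hT : ∃ r j1 j2, j1 ≠ j2 ∧ g r j1 = a ∧ g r j2 = a
  · obtain ⟨r, j1, j2, hj, e1, e2⟩ := hT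
    have key : ∀ k c, k ≠ r → g k c = a → g r c = a := by
      intro k c hk hc
      by_contra hn
      have n1 : j1 ≠ c := fun h => hn (h ▸ e1)
      have n2 : j2 ≠ c := fun h => hn (h ▸ e2)
      have m1 := (k1 r k j1 c hk.symm n1 e1 hc).resolve_left hn
      have m2 := (k1 r k j2 c hk.symm n2 e2 hc).resolve_left hn
      exact k2 r k j1 j2 hk.symm hj e1 e2 m1 m2
    by_cases hk : ∃ k c, k ≠ r ∧ g k c = a
    · obtain ⟨k, c, hkr, hkc⟩ := hk
      refine ⟨r, c, fun i l hil => ?_⟩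
      by_contra! hn
      have m1 := key k c hkr hkc
      have m2 := key i l hn.1 hil
      by_cases hik : k = i
      · subst hik
        exact k2 r k c l hkr.symm hn.2.symm m1 m2 hkc hil
      · rcases k1 k i c l hik hn.2.symm hkc hil with h | h
        · exact k2 r k c l hkr.symm hn.2.symm m1 m2 hkc h
        · exact k2 r i c l hn.1.symm hn.2.symm m1 m2 h hil
    · push Not at hk
      exact ⟨r, j1, fun i l hil => Or.inl (by by_contra hn; exact hk i l hn hil)⟩
  · by_cases hE : ∃ r c, g r c = a
    · obtain ⟨r, c, e⟩ := hE
      refine ⟨r, c, fun i l hil => ?_⟩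
      by_contra! hn
      rcases k1 r i c l hn.1.symm hn.2.symm e hil with h | h
      · exact hT ⟨r, c, l, hn.2.symm, e, h⟩
      · exact hT ⟨i, c, l, hn.2.symm, h, hil⟩
    · exact ⟨z, z, fun i l hil => (hE ⟨i, l, hil⟩).elim⟩

theorem miss_aux {p : ℕ} {A : Type*} (S : Set A) (hS : S.Finite) (h : S.ncard < p)
    (f : A → Fin p) : ∃ i, ∀ a ∈ S, f a ≠ i := by
  by_contra! hc
  have hu : f '' S = Set.univ := by
    ext i
    simpa using hc i
  have h3 := Set.ncard_image_le (f := f) hS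
  rw [hu, Set.ncard_univ, Nat.card_fin] at h3
  omega

/-- If a `p × p` voting form contains at most `p - 1` distinct candidates as
entries, then it contains `m1` or `m2` as a submatrix. -/
theorem containsM1_or_M2_of_too_few_candidates
    {p : ℕ} {A : Type*} (g : Fin p → Fin p → A)
    (h : {a : A | ∃ i j, g i j = a}.ncard < p) :
    ContainsM1 g ∨ ContainsM2 g := by
  by_contra! hc
  have hz : 0 < p := by omega
  choose r c hrc using cross_aux g ⟨0, hz⟩ hc.1 hc.2
  have hfin : {a : A | ∃ i j, g i j = a}.Finite := by
    refine (Set.finite_range (fun x : Fin p × Fin p => g x.1 x.2)).subset ?_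
    rintro a ⟨i, j, rfl⟩
    exact ⟨(i, j), rfl⟩
  obtain ⟨i, hi⟩ := miss_aux _ hfin h r
  obtain ⟨j, hj⟩ := miss_aux _ hfin h c
  rcases hrc (g i j) i j rfl with e | e
  · exact hi (g i j) ⟨i, j, rfl⟩ e.symm
  · exact hj (g i j) ⟨i, j, rfl⟩ e.symm
end

section
/- Let A be a finite set of exactly p candidates and let g : Fin p → Fin p → A be a p × p voting form in which every candidate of A appears as an entry, and which contains none of m1, m2, m3 as a submatrix. Then g is a plurality DAV form: there exist bijections σ : Fin p → A and τ : Fin p → A such that for all i, j, either g(i,j) = σ(i) or g(i,j) = τ(j). -/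
/-- Candidates occurring twice in a row can be assigned to their rows, bijectively. -/
theorem exists_row_equiv {p : ℕ} {A : Type*} [Fintype A] (hA : Fintype.card A = p)
    (g : Fin p → Fin p → A) (h1 : ¬ ContainsM1 g) (h2 : ¬ ContainsM2 g)
    (h3 : ∀ i a b, TwiceInRow g i a → TwiceInRow g i b → a = b) :
    ∃ ρ : A ≃ Fin p, (∀ i a, TwiceInRow g i a → ρ a = i) ∧ ∀ a, ∃ j, g (ρ a) j = a := by
  classical
  have m1 : ∀ i k j l : Fin p, i ≠ k → j ≠ l → g i j = g k l →
      g i l = g i j ∨ g k j = g i j := by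
    intro i k j l a b c
    by_contra! h
    exact h1 ⟨i, k, j, l, a, b, c, h.1, h.2⟩
  have m2 : ∀ i k j l : Fin p, i ≠ k → j ≠ l → g i j = g i l → g i j = g k j →
      g i j ≠ g k l := fun i k j l a b c d e => h2 ⟨i, k, j, l, a, b, c, d, e⟩
  have uniq : ∀ i k a, TwiceInRow g i a → TwiceInRow g k a → i = k := by
    rintro i k a ⟨j, l, hjl, hj, hl⟩ ⟨j', l', hjl', hj', hl'⟩
    by_contra hik
    by_cases hs : ∀ m, g i m = a → g k m = a
    · have := hs j hj
      have := hs l hl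
      exact m2 i k j l hik hjl (by simp [*]) (by simp [*]) (by simp [*])
    · push Not at hs
      obtain ⟨m, hm, hm'⟩ := hs
      have key : ∀ n, g k n = a → g i n = a := by
        intro n hn
        have hmn : m ≠ n := by rintro rfl; exact hm' hn
        rcases m1 i k m n hik hmn (by simp [*]) with h | h
        · rw [h, hm]
        · exact absurd (h.trans hm) hm'
      have := key j' hj'
      have := key l' hl'
      exact m2 i k j' l' hik hjl' (by simp [*]) (by simp [*]) (by simp [*])
  by_cases hne : Nonempty (Fin p)
  swap
  · have : IsEmpty (Fin p) := not_nonempty_iff.mp hne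
    let e : A ≃ Fin p := Fintype.equivFinOfCardEq hA
    exact ⟨e, fun i => isEmptyElim i, fun a => isEmptyElim (e a)⟩
  have hf : ∃ f : A → Fin p, ∀ i a, TwiceInRow g i a → f a = i := by
    refine ⟨fun a => if h : ∃ i, TwiceInRow g i a then h.choose else hne.some, ?_⟩
    intro i a h
    have h' : ∃ i, TwiceInRow g i a := ⟨i, h⟩
    simp only [h', dif_pos]
    exact uniq _ _ a h'.choose_spec h
  obtain ⟨f, hf⟩ := hf
  let S : Finset A := Finset.univ.filter fun a => ∃ i, TwiceInRow g i a
  have hinj : Set.InjOn f (S : Set A) := by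
    intro a ha b hb hab
    simp only [S, Finset.coe_filter, Finset.mem_univ, true_and, Set.mem_setOf_eq] at ha hb
    obtain ⟨i, hi⟩ := ha
    obtain ⟨k, hk⟩ := hb
    have e1 := hf i a hi
    have e2 := hf k b hk
    have : i = k := by rw [← e1, ← e2, hab]
    subst this
    exact h3 i a b hi hk
  obtain ⟨e, he⟩ := Finset.exists_equiv_extend_of_card_eq (t := (Finset.univ : Finset (Fin p)))
    (by simp [hA]) (s := S) (f := f) (by simp) hinj
  let ρ : A ≃ Fin p := e.trans (Equiv.subtypeUnivEquiv (by simp))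
  have hρ : ∀ i a, TwiceInRow g i a → ρ a = i := by
    intro i a h
    have := he a (by simp only [S, Finset.mem_filter, Finset.mem_univ, true_and]; exact ⟨i, h⟩)
    rw [hf i a h] at this
    exact this
  refine ⟨ρ, hρ, fun a => ?_⟩
  by_cases hin : Function.Injective (g (ρ a))
  · have hb := (Fintype.bijective_iff_injective_and_card (g (ρ a))).mpr ⟨hin, by simp [hA]⟩
    exact hb.2 a
  · simp only [Function.Injective] at hin
    push Not at hin
    obtain ⟨j, l, hjl, hne⟩ := hin
    have := hρ (ρ a) (g (ρ a) j) ⟨j, l, hne, rfl, hjl.symm⟩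
    exact ⟨j, ρ.injective this⟩

/-- If every candidate appears in `g` and `g` contains none of `m1, m2, m3`,
then `g` is a plurality DAV form. -/
theorem isPluralityDAV_of_no_forbidden
    {p : ℕ} {A : Type*} [Fintype A] (hA : Fintype.card A = p)
    (g : Fin p → Fin p → A) (hsurj : ∀ a : A, ∃ i j, g i j = a)
    (h1 : ¬ ContainsM1 g) (h2 : ¬ ContainsM2 g) (h3 : ¬ ContainsM3 g) :
    IsPluralityDAV g := by
  obtain ⟨ρ, hρ, hρ'⟩ := exists_row_equiv hA g h1 h2 (by
    intro i a b ha hb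
    by_contra hab
    exact h3 (Or.inl ⟨i, a, b, hab, ha, hb⟩))
  obtain ⟨κ, hκ, hκ'⟩ := exists_row_equiv hA (fun j i => g i j)
    (by
      rintro ⟨i, k, j, l, a, b, c, d, e⟩
      exact h1 ⟨j, l, i, k, b, a, c, e, d⟩)
    (by
      rintro ⟨i, k, j, l, a, b, c, d, e⟩
      exact h2 ⟨j, l, i, k, b, a, d, c, e⟩)
    (by
      intro i a b ha hb
      by_contra hab
      exact h3 (Or.inr ⟨i, a, b, hab, ha, hb⟩))
  refine ⟨ρ.symm, κ.symm, ρ.symm.bijective, κ.symm.bijective, fun i j => ?_⟩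
  rw [Equiv.eq_symm_apply, Equiv.eq_symm_apply]
  by_contra! hcon
  obtain ⟨hi, hj⟩ := hcon
  obtain ⟨l, hl⟩ := hρ' (g i j)
  have hcell : g (ρ (g i j)) j = g i j := by
    by_cases hjl : j = l
    · subst hjl
      exact hl
    · by_contra hn
      have hil : g i l ≠ g i j := fun h => hi (hρ i _ ⟨j, l, hjl, rfl, h⟩)
      exact h1 ⟨i, ρ (g i j), j, l, hi.symm, hjl, hl.symm, hil, hn⟩
  exact hj (hκ j _ ⟨i, ρ (g i j), hi.symm, rfl, hcell⟩)
end

section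
/- Let A be a finite set of exactly p candidates and let g : Fin p → Fin p → A be a p × p voting form that contains m1, m2, or m3 as a submatrix. Then g is not a plurality DAV form: there do not exist bijections σ : Fin p → A and τ : Fin p → A such that for all i, j, either g(i,j) = σ(i) or g(i,j) = τ(j). -/
/-- If `g` contains `m1`, `m2`, or `m3` as a submatrix, then `g` is not a
plurality DAV form. -/
theorem not_isPluralityDAV_of_forbidden
    {p : ℕ} {A : Type*} [Fintype A] (hA : Fintype.card A = p)
    (g : Fin p → Fin p → A)
    (h : ContainsM1 g ∨ ContainsM2 g ∨ ContainsM3 g) :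
    ¬ IsPluralityDAV g := by
  rintro ⟨σ, τ, hσ, hτ, hg⟩
  have hs : ∀ i k, σ i = σ k → i = k := fun i k e => hσ.1 e
  have ht : ∀ j l, τ j = τ l → j = l := fun j l e => hτ.1 e
  -- a candidate occurring twice in a line is the label of that line
  have hrow : ∀ i a, TwiceInRow g i a → σ i = a := by
    rintro i a ⟨j, l, hjl, h1, h2⟩
    have := hg i j
    have := hg i l
    have := ht j l
    grind
  have hcol : ∀ j a, TwiceInCol g j a → τ j = a := by
    rintro j a ⟨i, k, hik, h1, h2⟩
    have := hg i j
    have := hg k j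
    have := hs i k
    grind
  rcases h with ⟨i, k, j, l, hik, hjl, h1, h2, h3⟩ | ⟨i, k, j, l, hik, hjl, h1, h2, h3⟩ |
    ⟨i, a, b, hab, ha, hb⟩ | ⟨j, a, b, hab, ha, hb⟩
  · have := hg i j
    have := hg i l
    have := hg k j
    have := hg k l
    have := hs i k
    have := ht j l
    grind
  · have e1 := hrow i (g i j) ⟨j, l, hjl, rfl, h1.symm⟩
    have e2 := hrow k (g i j) ⟨j, l, hjl, h2.symm, h3.symm⟩
    exact hik (hs i k (e1.trans e2.symm))
  · exact hab ((hrow i a ha).symm.trans (hrow i b hb))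
  · exact hab ((hcol j a ha).symm.trans (hcol j b hb))
end

section
/- Let A be a finite set of exactly p candidates and let g : Fin p → Fin p → A be a p × p voting form in which every candidate of A appears as an entry. Then g is a plurality DAV form (i.e., there exist bijections σ, τ : Fin p → A with g(i,j) ∈ {σ(i), τ(j)} for all i, j) if and only if g contains none of m1, m2, m3 as a submatrix. -/
/-- If no candidate is doubled in two rows and no row has two doubled candidates, the
doubled candidate assignment on rows extends to a bijection. -/
theorem exists_row_labeling {p : ℕ} {A : Type*} [Fintype A] (hA : Fintype.card A = p)
    (g : Fin p → Fin p → A)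
    (h1 : ¬ ContainsM1 g) (h2 : ¬ ContainsM2 g)
    (h3 : ∀ i a b, TwiceInRow g i a → TwiceInRow g i b → a = b) :
    ∃ σ : Fin p → A, Function.Bijective σ ∧ (∀ i a, TwiceInRow g i a → σ i = a) ∧
      ∀ a, ∃ i j, σ i = a ∧ g i j = a := by
  classical
  have hinj : ∀ i k a, TwiceInRow g i a → TwiceInRow g k a → i = k := by
    intro i k a hi hk
    by_contra hne
    by_cases hsub : ∀ j, g i j = a → g k j = a
    · obtain ⟨j, l, hjl, hj, hl⟩ := hi
      exact h2 ⟨i, k, j, l, hne, hjl, by rw [hj, hl], by rw [hj, hsub j hj],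
        by rw [hj, hsub l hl]⟩
    · push Not at hsub
      obtain ⟨j, hj, hkj⟩ := hsub
      by_cases hsub' : ∀ l, g k l = a → g i l = a
      · obtain ⟨m, l, hjl, hm, hl⟩ := hk
        exact h2 ⟨i, k, m, l, hne, hjl, by rw [hsub' m hm, hsub' l hl],
          by rw [hm, hsub' m hm], by rw [hsub' m hm, hl]⟩
      · push Not at hsub'
        obtain ⟨l, hl, hil⟩ := hsub'
        refine h1 ⟨i, k, j, l, hne, ?_, by rw [hj, hl], by rwa [hj], by rwa [hj]⟩
        rintro rfl
        exact hkj hl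
  let f : Fin p → A := fun i => if h : ∃ a, TwiceInRow g i a then h.choose else g i i
  have hf : ∀ i a, TwiceInRow g i a → f i = a := by
    intro i a h
    have hex : ∃ a, TwiceInRow g i a := ⟨a, h⟩
    simp only [f, dif_pos hex]
    exact h3 i _ _ hex.choose_spec h
  let s : Finset (Fin p) := Finset.univ.filter fun i => ∃ a, TwiceInRow g i a
  obtain ⟨e, he⟩ := Finset.exists_equiv_extend_of_card_eq (α := Fin p) (β := A)
    (t := Finset.univ) (by simp [hA]) (s := s) (f := f) (Finset.subset_univ _) (by
      intro i hi k hk hik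
      have hi' : ∃ a, TwiceInRow g i a := by simpa [s] using hi
      have hk' : ∃ a, TwiceInRow g k a := by simpa [s] using hk
      obtain ⟨a, ha⟩ := hi'
      obtain ⟨b, hb⟩ := hk'
      rw [hf i a ha, hf k b hb] at hik
      subst hik
      exact hinj i k a ha hb)
  have hbij : Function.Bijective (fun i => (e i : A)) :=
    ⟨fun i k h => e.injective (Subtype.ext h),
      fun a => ⟨e.symm ⟨a, Finset.mem_univ a⟩, by simp⟩⟩
  have hσ : ∀ i a, TwiceInRow g i a → (e i : A) = a := by
    intro i a h
    rw [he i (by simpa [s] using ⟨a, h⟩), hf i a h]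
  refine ⟨fun i => (e i : A), hbij, hσ, ?_⟩
  intro a
  obtain ⟨i, hi⟩ := hbij.2 a
  by_cases hex : ∃ b, TwiceInRow g i b
  · obtain ⟨b, hb⟩ := hex
    have hba : b = a := (hσ i b hb).symm.trans hi
    subst hba
    obtain ⟨j, l, _, hj, _⟩ := hb
    exact ⟨i, j, hi, hj⟩
  · have hgi : Function.Injective (g i) := by
      intro j l hjl
      by_contra hne
      exact hex ⟨g i l, j, l, hne, hjl, rfl⟩
    have hgb : Function.Bijective (g i) :=
      (Fintype.bijective_iff_injective_and_card _).2 ⟨hgi, by simp [hA]⟩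
    obtain ⟨j, hj⟩ := hgb.2 a
    exact ⟨i, j, hi, hj⟩

/-- Characterization: a `p × p` voting form in which all `p` candidates appear
is a plurality DAV form iff it contains none of `m1, m2, m3` as a submatrix. -/
theorem isPluralityDAV_iff_no_forbidden
    {p : ℕ} {A : Type*} [Fintype A] (hA : Fintype.card A = p)
    (g : Fin p → Fin p → A) (hsurj : ∀ a : A, ∃ i j, g i j = a) :
    IsPluralityDAV g ↔ (¬ ContainsM1 g ∧ ¬ ContainsM2 g ∧ ¬ ContainsM3 g) := by
  constructor
  · rintro ⟨σ, τ, ⟨hσ, _⟩, ⟨hτ, _⟩, h⟩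
    refine ⟨?_, ?_, ?_⟩
    · rintro ⟨i, k, j, l, hik, hjl, h1, h2, h3⟩
      have := @hσ i k
      have := @hτ j l
      have := h i j
      have := h k l
      have := h i l
      have := h k j
      grind
    · rintro ⟨i, k, j, l, hik, hjl, h1, h2, h3⟩
      have := @hσ i k
      have := @hτ j l
      have := h i j
      have := h k l
      have := h i l
      have := h k j
      grind
    · rintro (⟨i, a, b, hab, ⟨j, l, hjl, hj, hl⟩, ⟨m, n, hmn, hm, hn⟩⟩ |
        ⟨i, a, b, hab, ⟨j, l, hjl, hj, hl⟩, ⟨m, n, hmn, hm, hn⟩⟩)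
      · have := @hτ j l
        have := @hτ m n
        have := h i j
        have := h i l
        have := h i m
        have := h i n
        grind
      · have := @hσ j l
        have := @hσ m n
        have := h j i
        have := h l i
        have := h m i
        have := h n i
        grind
  · rintro ⟨h1, h2, h3⟩
    obtain ⟨σ, hσ, hσ2, hσ3⟩ := exists_row_labeling hA g h1 h2 (by
      intro i a b ha hb
      by_contra hab
      exact h3 (Or.inl ⟨i, a, b, hab, ha, hb⟩))
    obtain ⟨τ, hτ, hτ2, _⟩ := exists_row_labeling hA (fun j i => g i j)
      (by
        rintro ⟨i, k, j, l, hik, hjl, e1, e2, e3⟩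
        exact h1 ⟨j, l, i, k, hjl, hik, e1, e3, e2⟩)
      (by
        rintro ⟨i, k, j, l, hik, hjl, e1, e2, e3⟩
        exact h2 ⟨j, l, i, k, hjl, hik, e2, e1, e3⟩)
      (by
        intro i a b ha hb
        by_contra hab
        exact h3 (Or.inr ⟨i, a, b, hab, ha, hb⟩))
    refine ⟨σ, τ, hσ, hτ, ?_⟩
    intro i j
    by_contra hcon
    push Not at hcon
    obtain ⟨hi, hj⟩ := hcon
    obtain ⟨r, l, hr, hl⟩ := hσ3 (g i j)
    have hir : i ≠ r := by
      rintro rfl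
      exact hi hr.symm
    have hrow : ∀ m, j ≠ m → g i m ≠ g i j := fun m hm hg =>
      hi (hσ2 i (g i j) ⟨j, m, hm, rfl, hg⟩).symm
    have hcol : ∀ m, i ≠ m → g m j ≠ g i j := fun m hm hg =>
      hj (hτ2 j (g i j) ⟨i, m, hm, rfl, hg⟩).symm
    have hjl : j ≠ l := by
      rintro rfl
      exact hcol r hir hl
    exact h1 ⟨i, r, j, l, hir, hjl, hl.symm, hrow l hjl, hcol r hir⟩
end

section
/- The set of forbidden patterns {m1, m2, m3} is minimal: for each index i ∈ {1,2,3} there exist a natural number p, a finite set A of exactly p candidates, and a p × p voting form g : Fin p → Fin p → A in which every candidate of A appears, such that g contains pattern m_i as a submatrix, contains neither of the other two patterns, and g is not a plurality DAV form (no bijections σ, τ : Fin p → A exist with g(i,j) ∈ {σ(i), τ(j)} for all i, j). -/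
/-- Minimality of the forbidden set `{m1, m2, m3}`: for each pattern there is a
voting form (with all candidates appearing) containing only that pattern which
is not a plurality DAV form. -/
theorem forbidden_set_minimal :
    (∃ (p : ℕ) (A : Type) (inst : Fintype A) (g : Fin p → Fin p → A),
      @Fintype.card A inst = p ∧ (∀ a : A, ∃ i j, g i j = a) ∧
      ContainsM1 g ∧ ¬ ContainsM2 g ∧ ¬ ContainsM3 g ∧ ¬ IsPluralityDAV g) ∧
    (∃ (p : ℕ) (A : Type) (inst : Fintype A) (g : Fin p → Fin p → A),
      @Fintype.card A inst = p ∧ (∀ a : A, ∃ i j, g i j = a) ∧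
      ContainsM2 g ∧ ¬ ContainsM1 g ∧ ¬ ContainsM3 g ∧ ¬ IsPluralityDAV g) ∧
    (∃ (p : ℕ) (A : Type) (inst : Fintype A) (g : Fin p → Fin p → A),
      @Fintype.card A inst = p ∧ (∀ a : A, ∃ i j, g i j = a) ∧
      ContainsM3 g ∧ ¬ ContainsM1 g ∧ ¬ ContainsM2 g ∧ ¬ IsPluralityDAV g) := by
  refine ⟨⟨3, Fin 3, inferInstance, ![![0,1,1],![2,0,1],![2,2,0]], by decide, by decide,
      ?_, ?_, ?_, ?_⟩,
    ⟨3, Fin 3, inferInstance, ![![0,0,0],![0,0,1],![0,0,2]], by decide, by decide,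
      ?_, ?_, ?_, ?_⟩,
    ⟨4, Fin 4, inferInstance, ![![0,0,1,1],![0,2,2,1],![0,2,3,1],![0,3,3,1]], by decide, by decide,
      ?_, ?_, ?_, ?_⟩⟩
  · unfold ContainsM1; decide
  · unfold ContainsM2; decide
  · unfold ContainsM3 TwiceInRow TwiceInCol; decide
  · rintro ⟨σ, τ, ⟨hσ, -⟩, ⟨hτ, -⟩, h⟩
    have s01 := hσ.ne (show (0 : Fin 3) ≠ 1 by decide)
    have s02 := hσ.ne (show (0 : Fin 3) ≠ 2 by decide)
    have s12 := hσ.ne (show (1 : Fin 3) ≠ 2 by decide)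
    have t01 := hτ.ne (show (0 : Fin 3) ≠ 1 by decide)
    have t02 := hτ.ne (show (0 : Fin 3) ≠ 2 by decide)
    have t12 := hτ.ne (show (1 : Fin 3) ≠ 2 by decide)
    have h0 : (0 : Fin 3) = σ 0 ∨ 0 = τ 0 := h 0 0
    have h1 : (0 : Fin 3) = σ 1 ∨ 0 = τ 1 := h 1 1
    have h2 : (0 : Fin 3) = σ 2 ∨ 0 = τ 2 := h 2 2
    grind
  · unfold ContainsM2; decide
  · unfold ContainsM1; decide
  · unfold ContainsM3 TwiceInRow TwiceInCol; decide
  · rintro ⟨σ, τ, ⟨hσ, -⟩, ⟨hτ, -⟩, h⟩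
    have s01 := hσ.ne (show (0 : Fin 3) ≠ 1 by decide)
    have t01 := hτ.ne (show (0 : Fin 3) ≠ 1 by decide)
    have h0 : (0 : Fin 3) = σ 0 ∨ 0 = τ 0 := h 0 0
    have h1 : (0 : Fin 3) = σ 1 ∨ 0 = τ 0 := h 1 0
    have h2 : (0 : Fin 3) = σ 0 ∨ 0 = τ 1 := h 0 1
    have h3 : (0 : Fin 3) = σ 1 ∨ 0 = τ 1 := h 1 1
    grind
  · unfold ContainsM3 TwiceInRow TwiceInCol; decide
  · unfold ContainsM1; decide
  · unfold ContainsM2; decide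
  · rintro ⟨σ, τ, ⟨hσ, -⟩, ⟨hτ, -⟩, h⟩
    have t01 := hτ.ne (show (0 : Fin 4) ≠ 1 by decide)
    have t23 := hτ.ne (show (2 : Fin 4) ≠ 3 by decide)
    have ne : (0 : Fin 4) ≠ 1 := by decide
    have h0 : (0 : Fin 4) = σ 0 ∨ 0 = τ 0 := h 0 0
    have h1 : (0 : Fin 4) = σ 0 ∨ 0 = τ 1 := h 0 1
    have h2 : (1 : Fin 4) = σ 0 ∨ 1 = τ 2 := h 0 2
    have h3 : (1 : Fin 4) = σ 0 ∨ 1 = τ 3 := h 0 3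
    grind
end

section
/- Consider n voters with positive integer weights α_1, …, α_n, two candidates a and b, and the DAV correspondence h. Fix a voter i and two distinct values z, z' ∈ {0,…,α_i}. Then s_h(i,z,a) = s_h(i,z',a) and s_h(i,z,b) = s_h(i,z',b) hold if and only if the planes h_{i,z} and h_{i,z'} are identical, i.e., for every pair of strategy profiles w, w' with w_i = z, w'_i = z', and w_j = w'_j for all j ≠ i, one has h(w) = h(w'). -/
/-- In distributed approval voting with two candidates `a` and `b`, voter `i`
with weight `w i` playing `z i` gives `z i` cards to `a` and `w i - z i` cards
to `b`. `twoAM w z a b` is the set of candidates (among `{a, b}`) receiving the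
maximum total number of cards. -/
def twoAM {n : ℕ} {A : Type*} [DecidableEq A] (w z : Fin n → ℕ) (a b : A) : Set A :=
  {c | c ∈ ({a, b} : Set A) ∧
    ∀ d ∈ ({a, b} : Set A),
      (if d = a then ∑ i, z i else ∑ i, (w i - z i)) ≤
        (if c = a then ∑ i, z i else ∑ i, (w i - z i))}

theorem mem_a_twoAM {n : ℕ} {A : Type*} [DecidableEq A] (w v : Fin n → ℕ) (a b : A)
    (hab : a ≠ b) : a ∈ twoAM w v a b ↔ ∑ i, (w i - v i) ≤ ∑ i, v i := by
  simp [twoAM, hab.symm]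

theorem mem_b_twoAM {n : ℕ} {A : Type*} [DecidableEq A] (w v : Fin n → ℕ) (a b : A)
    (hab : a ≠ b) : b ∈ twoAM w v a b ↔ ∑ i, v i ≤ ∑ i, (w i - v i) := by
  simp [twoAM, hab.symm]

theorem twoAM_eq_iff {n : ℕ} {A : Type*} [DecidableEq A] (w v v' : Fin n → ℕ) (a b : A) :
    twoAM w v a b = twoAM w v' a b ↔
      (a ∈ twoAM w v a b ↔ a ∈ twoAM w v' a b) ∧ (b ∈ twoAM w v a b ↔ b ∈ twoAM w v' a b) := by
  constructor
  · intro h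
    rw [h]
    simp
  · rintro ⟨h1, h2⟩
    ext c
    constructor
    · intro hc
      rcases hc.1 with h | h
      · subst h; exact h1.1 hc
      · have h : c = b := h
        subst h; exact h2.1 hc
    · intro hc
      rcases hc.1 with h | h
      · subst h; exact h1.2 hc
      · have h : c = b := h
        subst h; exact h2.2 hc

theorem plane_key (n : ℕ) (w : Fin n → ℕ) (i : Fin n) (z z' : ℕ) (hz : z ≤ w i) (hz' : z' ≤ w i)
    (P : (Fin n → ℕ) → Prop)
    (mono : ∀ v v' : Fin n → ℕ, (∀ j, v j ≤ w j) → (∀ j, v' j ≤ w j) →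
      v i = z → v' i = z' → (∀ j, j ≠ i → v j = v' j) → P v → P v') :
    {v : Fin n → ℕ | (∀ j, v j ≤ w j) ∧ v i = z ∧ P v}.ncard =
      {v : Fin n → ℕ | (∀ j, v j ≤ w j) ∧ v i = z' ∧ P v}.ncard ↔
    ∀ v v' : Fin n → ℕ, (∀ j, v j ≤ w j) → (∀ j, v' j ≤ w j) →
      v i = z → v' i = z' → (∀ j, j ≠ i → v j = v' j) → (P v ↔ P v') := by
  set S := {v : Fin n → ℕ | (∀ j, v j ≤ w j) ∧ v i = z ∧ P v} with hS
  set T := {v : Fin n → ℕ | (∀ j, v j ≤ w j) ∧ v i = z' ∧ P v} with hT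
  have upd : ∀ (x : ℕ), x ≤ w i → ∀ v : Fin n → ℕ, (∀ j, v j ≤ w j) →
      ∀ j, Function.update v i x j ≤ w j := by
    intro x hx v hv j
    by_cases h : j = i
    · subst h; simpa using hx
    · simpa [h] using hv j
  have hfin : T.Finite := by
    apply (Set.finite_Iic w).subset
    intro v hv
    exact hv.1
  let f : (Fin n → ℕ) → (Fin n → ℕ) := fun v => Function.update v i z'
  have hinj : Set.InjOn f S := by
    intro u hu v hv h
    funext j
    by_cases hj : j = i
    · subst hj; rw [hu.2.1, hv.2.1]
    · have := congrFun h j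
      simpa [f, hj] using this
  have hsub : f '' S ⊆ T := by
    rintro _ ⟨v, hv, rfl⟩
    refine ⟨upd z' hz' v hv.1, by simp [f], ?_⟩
    refine mono v _ hv.1 (upd z' hz' v hv.1) hv.2.1 (by simp [f]) ?_ hv.2.2
    intro j hj
    simp [f, hj]
  rw [← Set.ncard_image_of_injOn hinj]
  constructor
  · intro h v v' hv hv' hvi hvi' hag
    refine ⟨mono v v' hv hv' hvi hvi' hag, fun hP => ?_⟩
    have heq := Set.eq_of_subset_of_ncard_le hsub h.ge hfin
    have hm : v' ∈ f '' S := by rw [heq]; exact ⟨hv', hvi', hP⟩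
    obtain ⟨u, hu, huv⟩ := hm
    have : u = v := by
      funext j
      by_cases hj : j = i
      · subst hj; rw [hu.2.1, hvi]
      · rw [hag j hj, ← huv]; simp [f, hj]
    exact this ▸ hu.2.2
  · intro h
    congr 1
    apply hsub.antisymm
    intro v hv
    have hag : ∀ j, j ≠ i → Function.update v i z j = v j := by
      intro j hj; simp [hj]
    refine ⟨Function.update v i z, ⟨upd z hz v hv.1, by simp, ?_⟩, ?_⟩
    · exact (h _ v (upd z hz v hv.1) hv.1 (by simp) hv.2.1 hag).2 hv.2.2
    · simp [f, ← hv.2.1]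

theorem sums_mono {n : ℕ} (w v v' : Fin n → ℕ) (i : Fin n) (h : v i ≤ v' i)
    (hag : ∀ j, j ≠ i → v j = v' j) :
    ∑ j, v j ≤ ∑ j, v' j ∧ ∑ j, (w j - v' j) ≤ ∑ j, (w j - v j) := by
  have hle : ∀ j, v j ≤ v' j := by
    intro j
    by_cases hj : j = i
    · subst hj; exact h
    · exact (hag j hj).le
  exact ⟨Finset.sum_le_sum fun j _ => hle j,
    Finset.sum_le_sum fun j _ => Nat.sub_le_sub_left (hle j) _⟩

theorem planes_of_lt
    (n : ℕ) (w : Fin n → ℕ)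
    {A : Type*} [DecidableEq A] (a b : A) (hab : a ≠ b)
    (i : Fin n) (z z' : ℕ) (hz : z ≤ w i) (hz' : z' ≤ w i) (hlt : z ≤ z') :
    ({v : Fin n → ℕ | (∀ j, v j ≤ w j) ∧ v i = z ∧ a ∈ twoAM w v a b}.ncard =
        {v : Fin n → ℕ | (∀ j, v j ≤ w j) ∧ v i = z' ∧ a ∈ twoAM w v a b}.ncard ∧
      {v : Fin n → ℕ | (∀ j, v j ≤ w j) ∧ v i = z ∧ b ∈ twoAM w v a b}.ncard =
        {v : Fin n → ℕ | (∀ j, v j ≤ w j) ∧ v i = z' ∧ b ∈ twoAM w v a b}.ncard) ↔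
    (∀ v v' : Fin n → ℕ, (∀ j, v j ≤ w j) → (∀ j, v' j ≤ w j) →
      v i = z → v' i = z' → (∀ j, j ≠ i → v j = v' j) →
      twoAM w v a b = twoAM w v' a b) := by
  have ka := plane_key n w i z z' hz hz' (fun v => a ∈ twoAM w v a b) (by
    intro v v' _ _ h1 h2 hag
    have := sums_mono w v v' i (by omega) hag
    simp only [mem_a_twoAM _ _ _ _ hab]
    omega)
  have kb := plane_key n w i z' z hz' hz (fun v => b ∈ twoAM w v a b) (by
    intro v v' _ _ h1 h2 hag
    have := sums_mono w v' v i (by omega) (fun j hj => (hag j hj).symm)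
    simp only [mem_b_twoAM _ _ _ _ hab]
    omega)
  rw [ka, eq_comm, kb]
  constructor
  · rintro ⟨h1, h2⟩ v v' hv hv' e e' hag
    exact (twoAM_eq_iff w v v' a b).2 ⟨h1 v v' hv hv' e e' hag,
      (h2 v' v hv' hv e' e (fun j hj => (hag j hj).symm)).symm⟩
  · intro h
    refine ⟨fun v v' hv hv' e e' hag => ?_, fun v v' hv hv' e e' hag => ?_⟩
    · rw [h v v' hv hv' e e' hag]
    · rw [h v' v hv' hv e' e (fun j hj => (hag j hj).symm)]

/-- Two planes `h_{i,z}` and `h_{i,z'}` of the two-candidate DAV correspondence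
are identical iff their signatures (counts of occurrences of `a` and of `b`)
coincide. -/
theorem twoCandidate_correspondence_planes_eq_iff_signatures_eq
    (n : ℕ) (w : Fin n → ℕ) (hw : ∀ i, 1 ≤ w i)
    {A : Type*} [DecidableEq A] (a b : A) (hab : a ≠ b)
    (i : Fin n) (z z' : ℕ) (hz : z ≤ w i) (hz' : z' ≤ w i) (hne : z ≠ z') :
    ({v : Fin n → ℕ | (∀ j, v j ≤ w j) ∧ v i = z ∧ a ∈ twoAM w v a b}.ncard =
        {v : Fin n → ℕ | (∀ j, v j ≤ w j) ∧ v i = z' ∧ a ∈ twoAM w v a b}.ncard ∧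
      {v : Fin n → ℕ | (∀ j, v j ≤ w j) ∧ v i = z ∧ b ∈ twoAM w v a b}.ncard =
        {v : Fin n → ℕ | (∀ j, v j ≤ w j) ∧ v i = z' ∧ b ∈ twoAM w v a b}.ncard) ↔
    (∀ v v' : Fin n → ℕ, (∀ j, v j ≤ w j) → (∀ j, v' j ≤ w j) →
      v i = z → v' i = z' → (∀ j, j ≠ i → v j = v' j) →
      twoAM w v a b = twoAM w v' a b) := by
  rcases le_total z z' with h | h
  · exact planes_of_lt n w a b hab i z z' hz hz' h
  · have k := planes_of_lt n w a b hab i z' z hz' hz h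
    constructor
    · rintro ⟨h1, h2⟩ v v' hv hv' e e' hag
      exact (k.1 ⟨h1.symm, h2.symm⟩ v' v hv' hv e' e (fun j hj => (hag j hj).symm)).symm
    · intro h
      have := k.2 (fun v v' hv hv' e e' hag =>
        (h v' v hv' hv e' e (fun j hj => (hag j hj).symm)).symm)
      exact ⟨this.1.symm, this.2.symm⟩
end

section
/- Consider n voters with positive integer weights α_1, …, α_n, two candidates a and b, and any DAV form g (so g(z) ∈ AM(z) for every strategy profile z). Fix a voter i and two distinct values z, z' ∈ {0,…,α_i}. Then s_g(i,z,a) = s_g(i,z',a) holds if and only if the planes g_{i,z} and g_{i,z'} are identical, i.e., for every pair of strategy profiles w, w' with w_i = z, w'_i = z', and w_j = w'_j for all j ≠ i, one has g(w) = g(w'). -/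
/-- The case `z < z'`, as a helper. -/
lemma planes_aux
    (n : ℕ) (w : Fin n → ℕ)
    {A : Type*} [DecidableEq A] (a b : A) (hab : a ≠ b)
    (g : (Fin n → ℕ) → A)
    (hg : ∀ v : Fin n → ℕ, (∀ j, v j ≤ w j) → g v ∈ twoAM w v a b)
    (i : Fin n) (z z' : ℕ) (hz : z ≤ w i) (hz' : z' ≤ w i) (hlt : z < z') :
    ({v : Fin n → ℕ | (∀ j, v j ≤ w j) ∧ v i = z ∧ g v = a}.ncard =
        {v : Fin n → ℕ | (∀ j, v j ≤ w j) ∧ v i = z' ∧ g v = a}.ncard) ↔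
    (∀ v v' : Fin n → ℕ, (∀ j, v j ≤ w j) → (∀ j, v' j ≤ w j) →
      v i = z → v' i = z' → (∀ j, j ≠ i → v j = v' j) →
      g v = g v') := by
  have hmem : ∀ v : Fin n → ℕ, (∀ j, v j ≤ w j) → g v = a ∨ g v = b := by
    intro v hv
    have h := (hg v hv).1
    simpa using h
  have key : ∀ v v' : Fin n → ℕ, (∀ j, v j ≤ w j) → (∀ j, v' j ≤ w j) →
      v i = z → v' i = z' → (∀ j, j ≠ i → v j = v' j) → g v = a → g v' = a := by
    intro v v' hv hv' h1 h2 h3 h4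
    rcases hmem v' hv' with h | h
    · exact h
    exfalso
    have e1 := (hg v hv).2 b (by simp)
    have e2 := (hg v' hv').2 a (by simp)
    rw [h4, if_neg hab.symm, if_pos rfl] at e1
    rw [h, if_neg hab.symm, if_pos rfl] at e2
    have hle : ∀ j, v j ≤ v' j := by
      intro j
      by_cases hj : j = i
      · subst hj; omega
      · exact (h3 j hj).le
    have s1 : ∑ j, v j < ∑ j, v' j :=
      Finset.sum_lt_sum (fun j _ => hle j) ⟨i, Finset.mem_univ _, by omega⟩
    have s2 : ∑ j, (w j - v' j) ≤ ∑ j, (w j - v j) :=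
      Finset.sum_le_sum (fun j _ => Nat.sub_le_sub_left (hle j) _)
    omega
  have hfin : ∀ y : ℕ, {v : Fin n → ℕ | (∀ j, v j ≤ w j) ∧ v i = y ∧ g v = a}.Finite := by
    intro y
    exact (Set.finite_Iic w).subset (fun v hv => hv.1)
  have hupd : ∀ (v : Fin n → ℕ) (y : ℕ), y ≤ w i → (∀ j, v j ≤ w j) →
      ∀ j, Function.update v i y j ≤ w j := by
    intro v y hy hv j
    by_cases hj : j = i
    · subst hj; simpa using hy
    · simpa [hj] using hv j
  have hback : ∀ v v' : Fin n → ℕ, v i = z → (∀ j, j ≠ i → v j = v' j) →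
      Function.update v' i z = v := by
    intro v v' h1 h3
    funext j
    by_cases hj : j = i
    · subst hj; simp [h1]
    · simp [hj, h3 j hj]
  have hinj : Set.InjOn (fun v : Fin n → ℕ => Function.update v i z')
      {v : Fin n → ℕ | (∀ j, v j ≤ w j) ∧ v i = z ∧ g v = a} := by
    intro v hv u hu h
    have h' : Function.update v i z' = Function.update u i z' := h
    have e1 := hback v (Function.update v i z') hv.2.1 (fun j hj => by simp [hj])
    have e2 := hback u (Function.update u i z') hu.2.1 (fun j hj => by simp [hj])
    rw [← e1, h', e2]
  have hsub : (fun v : Fin n → ℕ => Function.update v i z') ''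
      {v : Fin n → ℕ | (∀ j, v j ≤ w j) ∧ v i = z ∧ g v = a} ⊆
      {v : Fin n → ℕ | (∀ j, v j ≤ w j) ∧ v i = z' ∧ g v = a} := by
    rintro _ ⟨v, ⟨hv, h1, h2⟩, rfl⟩
    exact ⟨hupd v z' hz' hv, by simp, key v _ hv (hupd v z' hz' hv) h1 (by simp)
      (fun j hj => by simp [hj]) h2⟩
  rw [← Set.ncard_image_of_injOn hinj]
  constructor
  · intro hc v v' hv hv' h1 h2 h3
    have heq := Set.eq_of_subset_of_ncard_le hsub hc.ge (hfin z')
    rcases hmem v' hv' with h | h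
    · have hm : v' ∈ {v : Fin n → ℕ | (∀ j, v j ≤ w j) ∧ v i = z' ∧ g v = a} := ⟨hv', h2, h⟩
      rw [← heq] at hm
      obtain ⟨u, ⟨hu, hu1, hu2⟩, huv⟩ := hm
      have huv' : Function.update u i z' = v' := huv
      have e1 := hback v v' h1 h3
      have e2 := hback u v' hu1 (fun j hj => by rw [← huv']; simp [hj])
      rw [h, ← e1, e2, hu2]
    · rcases hmem v hv with h' | h'
      · rw [h', key v v' hv hv' h1 h2 h3 h']
      · rw [h, h']
  · intro H
    congr 1
    refine hsub.antisymm ?_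
    rintro v ⟨hv, h1, h2⟩
    refine ⟨Function.update v i z, ⟨hupd v z hz hv, by simp, ?_⟩, ?_⟩
    · rw [H _ v (hupd v z hz hv) hv (by simp) h1 (fun j hj => by simp [hj]), h2]
    · simp [← h1]

/-- Two planes `g_{i,z}` and `g_{i,z'}` of a two-candidate DAV form are
identical iff the counts of occurrences of `a` in them coincide. -/
theorem twoCandidate_form_planes_eq_iff_signatures_eq
    (n : ℕ) (w : Fin n → ℕ) (hw : ∀ i, 1 ≤ w i)
    {A : Type*} [DecidableEq A] (a b : A) (hab : a ≠ b)
    (g : (Fin n → ℕ) → A)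
    (hg : ∀ v : Fin n → ℕ, (∀ j, v j ≤ w j) → g v ∈ twoAM w v a b)
    (i : Fin n) (z z' : ℕ) (hz : z ≤ w i) (hz' : z' ≤ w i) (hne : z ≠ z') :
    ({v : Fin n → ℕ | (∀ j, v j ≤ w j) ∧ v i = z ∧ g v = a}.ncard =
        {v : Fin n → ℕ | (∀ j, v j ≤ w j) ∧ v i = z' ∧ g v = a}.ncard) ↔
    (∀ v v' : Fin n → ℕ, (∀ j, v j ≤ w j) → (∀ j, v' j ≤ w j) →
      v i = z → v' i = z' → (∀ j, j ≠ i → v j = v' j) →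
      g v = g v') := by
  rcases lt_or_gt_of_ne hne with h | h
  · exact planes_aux n w a b hab g hg i z z' hz hz' h
  · rw [eq_comm, planes_aux n w a b hab g hg i z' z hz' hz h]
    constructor
    · intro H v v' hv hv' h1 h2 h3
      exact (H v' v hv' hv h2 h1 (fun j hj => (h3 j hj).symm)).symm
    · intro H v v' hv hv' h1 h2 h3
      exact (H v' v hv' hv h2 h1 (fun j hj => (h3 j hj).symm)).symm
end
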